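/- arXiv:2210.12183 — 2 statements merged into one kernel-verified Lean document; each statement's English description precedes it below -/
import Mathlib

section
/- Suppose P = ([n],⪯) is a chain 1 ⪯ 2 ⪯ ⋯ ⪯ n (the NRT block space). Then: (i) for 1 ≤ r ≤ M_w, the number of v ∈ 𝔽_q^N with w_{(P,w,π)}(v) = r equals |D_r^{k_1}|; (ii) for r = t·M_w + k with 0 < k ≤ M_w and 1 ≤ t ≤ n−1, the number of v ∈ 𝔽_q^N with w_{(P,w,π)}(v) = r equals q^{k_1+k_2+⋯+k_t}·|D_k^{k_{t+1}}|. -/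
open scoped Classical

noncomputable section

variable {F : Type*} [Field F] [Fintype F]
variable {ι : Type*} [Fintype ι] [PartialOrder ι]

/-- The block weight induced by `w`: the maximum of the weights of the coordinates. -/
def blockWt (w : F → ℕ) {m : ℕ} (v : Fin m → F) : ℕ :=
  Finset.univ.sup fun t => w (v t)

/-- `M_w`, the maximum weight of an element of `F`. -/
def maxWt (w : F → ℕ) : ℕ := Finset.univ.sup w

/-- `D_r = {α ∈ F : w(α) = r}`. -/
def Dset (w : F → ℕ) (r : ℕ) : Finset F := Finset.univ.filter fun a => w a = r

/-- `D_r^k = {v ∈ F^k : w̃^k(v) = r}`. -/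
def Dk (w : F → ℕ) (m r : ℕ) : Finset (Fin m → F) :=
  Finset.univ.filter fun v => blockWt w v = r

/-- The order ideal (down-set) of the poset generated by a finite set `A`. -/
def genIdeal (A : Finset ι) : Finset ι := Finset.univ.filter fun i => ∃ j ∈ A, i ≤ j

/-- The set of maximal elements of a finite set `I`. -/
def maxElems (I : Finset ι) : Finset ι := I.filter fun i => ∀ j ∈ I, i ≤ j → j = i

/-- `I` is an order ideal (down-set) of the poset. -/
def IsIdeal (I : Finset ι) : Prop := ∀ a b : ι, a ≤ b → b ∈ I → a ∈ I

/-- The collection `𝓘_j^i` of ideals of cardinality `i` with exactly `j` maximal elements. -/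
def idealsWithMax (ι : Type*) [Fintype ι] [PartialOrder ι] (j i : ℕ) : Finset (Finset ι) :=
  Finset.univ.filter fun I => IsIdeal I ∧ I.card = i ∧ (maxElems I).card = j

/-- The π-support of a block vector. -/
def suppPi (k : ι → ℕ) (x : ∀ i, Fin (k i) → F) : Finset ι :=
  Finset.univ.filter fun i => x i ≠ 0

/-- The `(P,w,π)`-weight. -/
def wtP (w : F → ℕ) (k : ι → ℕ) (x : ∀ i, Fin (k i) → F) : ℕ :=
  ∑ i ∈ maxElems (genIdeal (suppPi k x)), blockWt w (x i)
    + maxWt w * ((genIdeal (suppPi k x)) \ maxElems (genIdeal (suppPi k x))).card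

/-- The `(P,w,π)`-distance. -/
def dP (w : F → ℕ) (k : ι → ℕ) (x y : ∀ i, Fin (k i) → F) : ℕ := wtP w k (x - y)

/-!
On a chain, a nonzero vector `x` has a last nonzero block `t`, so that `I_x` is the set of all
`i ⪯ t` and `t` is its only maximal element. The weight of `x` is therefore `#(Iio t) * M_w + b`
with `b` the weight of the block `x_t`, and `0 < b ≤ M_w`. Division with remainder in `{1, …, M_w}`
recovers `t` and `b` from the weight. A vector of weight `#(Iio t) * M_w + r` is thus arbitrary
before `t`, lies in `D_r` at `t` and vanishes after `t`.
-/

section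

open Finset

section BlockWeight

variable {α : Type*}

lemma blockWt_le_maxWt [Fintype α] (w : α → ℕ) {m : ℕ} (v : Fin m → α) :
    blockWt w v ≤ maxWt w :=
  Finset.sup_le fun t _ => le_sup (f := w) (mem_univ (v t))

lemma blockWt_eq_zero_iff [Zero α] {w : α → ℕ} (hw : ∀ a, w a = 0 ↔ a = 0) {m : ℕ}
    {v : Fin m → α} : blockWt w v = 0 ↔ v = 0 := by
  simp only [blockWt, ← Nat.bot_eq_zero, Finset.sup_eq_bot_iff, mem_univ, true_imp_iff]
  simp only [Nat.bot_eq_zero, hw, funext_iff, Pi.zero_apply]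

end BlockWeight

section Poset

lemma genIdeal_eq_Iic [LocallyFiniteOrderBot ι] {A : Finset ι} {t : ι}
    (h : IsGreatest (A : Set ι) t) : genIdeal A = Iic t := by
  ext i
  simp only [genIdeal, mem_filter_univ, mem_Iic]
  exact ⟨fun ⟨_, hj, hij⟩ => hij.trans (h.2 hj), fun hi => ⟨t, h.1, hi⟩⟩

lemma maxElems_Iic [LocallyFiniteOrderBot ι] (t : ι) : maxElems (Iic t) = {t} := by
  ext i
  simp only [maxElems, mem_filter, mem_Iic, mem_singleton]
  refine ⟨fun ⟨hi, hmax⟩ => (hmax t le_rfl hi).symm, ?_⟩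
  rintro rfl
  exact ⟨le_rfl, fun j hj hij => hj.antisymm hij⟩

lemma wtP_eq_of_isGreatest_suppPi [LocallyFiniteOrderBot ι] (w : F → ℕ) {k : ι → ℕ}
    {x : ∀ i, Fin (k i) → F} {t : ι} (h : IsGreatest (suppPi k x : Set ι) t) :
    wtP w k x = #(Iio t) * maxWt w + blockWt w (x t) := by
  rw [wtP, genIdeal_eq_Iic h, maxElems_Iic, sum_singleton, sdiff_singleton_eq_erase, Iic_erase,
    add_comm, mul_comm]

lemma suppPi_nonempty_of_wtP_pos {w : F → ℕ} {k : ι → ℕ} {x : ∀ i, Fin (k i) → F}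
    (h : 0 < wtP w k x) : (suppPi k x).Nonempty := by
  contrapose! h
  simp [wtP, h, genIdeal, maxElems]

end Poset

lemma le_of_mul_add_eq_mul_add {M a b c d : ℕ} (hbM : b ≤ M) (hd : 0 < d)
    (h : a * M + b = c * M + d) : c ≤ a := by
  by_contra! hac
  have hmul : (a + 1) * M ≤ c * M := Nat.mul_le_mul_right M hac
  rw [add_one_mul] at hmul
  omega

lemma mul_add_eq_mul_add_iff_of_pos_of_le {M a b c d : ℕ} (hb : 0 < b) (hbM : b ≤ M)
    (hd : 0 < d) (hdM : d ≤ M) : a * M + b = c * M + d ↔ a = c ∧ b = d := by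
  refine ⟨fun h => ?_, fun ⟨hac, hbd⟩ => by rw [hac, hbd]⟩
  obtain rfl : a = c :=
    (le_of_mul_add_eq_mul_add hdM hb h.symm).antisymm (le_of_mul_add_eq_mul_add hbM hd h)
  exact ⟨rfl, Nat.add_left_cancel h⟩

lemma card_Iio_injective {γ : Type*} [LinearOrder γ] [LocallyFiniteOrderBot γ] :
    Function.Injective fun t : γ => #(Iio t) :=
  StrictMono.injective fun _ _ h => card_lt_card (Iio_ssubset_Iio h)

section Chain

variable {γ : Type*} [Fintype γ] [LinearOrder γ]

lemma isGreatest_suppPi_iff {K : Type*} [Field K] {k : γ → ℕ} {x : ∀ i, Fin (k i) → K} {t : γ} :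
    IsGreatest (suppPi k x : Set γ) t ↔ x t ≠ 0 ∧ ∀ j, t < j → x j = 0 := by
  simp only [IsGreatest, mem_upperBounds, suppPi, mem_coe, mem_filter_univ, ← not_lt,
    not_imp_not]

lemma wtP_eq_iff [LocallyFiniteOrderBot γ] {w : F → ℕ} (hw : ∀ a, w a = 0 ↔ a = 0) {k : γ → ℕ}
    {x : ∀ i, Fin (k i) → F} {t : γ} {r : ℕ} (hr : 0 < r) (hrM : r ≤ maxWt w) :
    wtP w k x = #(Iio t) * maxWt w + r ↔ blockWt w (x t) = r ∧ ∀ j, t < j → x j = 0 := by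
  constructor
  · intro h
    have hne : (suppPi k x).Nonempty := suppPi_nonempty_of_wtP_pos (w := w) (by omega)
    obtain ⟨s, hs⟩ : ∃ s, IsGreatest (suppPi k x : Set γ) s := ⟨_, isGreatest_max' _ hne⟩
    obtain ⟨hxs, hzero⟩ := isGreatest_suppPi_iff.mp hs
    have hpos : 0 < blockWt w (x s) := Nat.pos_of_ne_zero (mt (blockWt_eq_zero_iff hw).mp hxs)
    rw [wtP_eq_of_isGreatest_suppPi w hs,
      mul_add_eq_mul_add_iff_of_pos_of_le hpos (blockWt_le_maxWt w _) hr hrM] at h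
    obtain rfl : s = t := card_Iio_injective h.1
    exact ⟨h.2, hzero⟩
  · rintro ⟨rfl, hzero⟩
    have hxt : x t ≠ 0 := mt (blockWt_eq_zero_iff hw).mpr hr.ne'
    exact wtP_eq_of_isGreatest_suppPi w (isGreatest_suppPi_iff.mpr ⟨hxt, hzero⟩)

lemma card_filter_mem_and_forall_lt_eq [LocallyFiniteOrderBot γ] {α : γ → Type*}
    [∀ i, Fintype (α i)] (a : ∀ i, α i) (t : γ) (s : Finset (α t)) :
    #{v : ∀ i, α i | v t ∈ s ∧ ∀ j, t < j → v j = a j} =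
      (∏ i ∈ Iio t, Fintype.card (α i)) * #s := by
  let S : ∀ i, Finset (α i) := Function.update (fun i => if i < t then univ else {a i}) t s
  have hS_eq : S t = s := Function.update_self ..
  have hS_lt {i : γ} (hi : i < t) : S i = univ := by simp [S, hi, hi.ne]
  have hS_gt {i : γ} (hi : t < i) : S i = {a i} := by simp [S, hi.not_gt, hi.ne']
  have hS : ({v | v t ∈ s ∧ ∀ j, t < j → v j = a j} : Finset (∀ i, α i)) =
      Fintype.piFinset S := by
    ext v
    simp only [mem_filter_univ, Fintype.mem_piFinset]
    refine ⟨fun ⟨ht, hgt⟩ i => ?_, fun h => ⟨hS_eq ▸ h t, fun j hj => ?_⟩⟩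
    · rcases lt_trichotomy i t with hi | rfl | hi
      · exact hS_lt hi ▸ mem_univ _
      · exact hS_eq.symm ▸ ht
      · exact hS_gt hi ▸ mem_singleton.mpr (hgt i hi)
    · exact mem_singleton.mp (hS_gt hj ▸ h j)
  have hprod : ∏ i ∈ {t}ᶜ, #(S i) = ∏ i ∈ Iio t, Fintype.card (α i) := by
    have hsub : Iio t ⊆ {t}ᶜ := fun i hi => by simpa using (mem_Iio.mp hi).ne
    rw [← prod_subset hsub]
    · exact prod_congr rfl fun i hi => by rw [hS_lt (mem_Iio.mp hi), card_univ]
    · intro i hne hnlt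
      have hi : t < i := by
        rw [mem_compl, mem_singleton] at hne
        exact lt_of_le_of_ne (not_lt.mp (mt mem_Iio.mpr hnlt)) (Ne.symm hne)
      rw [hS_gt hi, card_singleton]
  rw [hS, Fintype.card_piFinset, Fintype.prod_eq_mul_prod_compl t, hprod, hS_eq, mul_comm]

theorem stmt9_general [LocallyFiniteOrderBot γ] {w : F → ℕ} (hw : ∀ a, w a = 0 ↔ a = 0)
    (k : γ → ℕ) (t : γ) {r : ℕ} (hr : 0 < r) (hrM : r ≤ maxWt w) :
    #{v : ∀ i, Fin (k i) → F | wtP w k v = #(Iio t) * maxWt w + r} =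
      Fintype.card F ^ (∑ i ∈ Iio t, k i) * #(Dk w (k t) r) :=
  calc #{v : ∀ i, Fin (k i) → F | wtP w k v = #(Iio t) * maxWt w + r}
    _ = #{v : ∀ i, Fin (k i) → F | v t ∈ Dk w (k t) r ∧
          ∀ j, t < j → v j = (0 : ∀ i, Fin (k i) → F) j} := by
      congr 1 with v
      simp only [mem_filter_univ, wtP_eq_iff hw hr hrM, Dk, Pi.zero_apply]
    _ = (∏ i ∈ Iio t, Fintype.card (Fin (k i) → F)) * #(Dk w (k t) r) := by
      -- the two filters carry different decidability instances
      convert card_filter_mem_and_forall_lt_eq (0 : ∀ i, Fin (k i) → F) t (Dk w (k t) r)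
    _ = Fintype.card F ^ (∑ i ∈ Iio t, k i) * #(Dk w (k t) r) := by
      simp only [Fintype.card_fun, Fintype.card_fin, prod_pow_eq_pow_sum]

end Chain

lemma filter_val_lt_eq_Iio {n t : ℕ} (ht : t < n) :
    (univ.filter fun i : Fin n => (i : ℕ) < t) = Iio ⟨t, ht⟩ :=
  filter_gt_eq_Iio (a := (⟨t, ht⟩ : Fin n))

end

/-- the weight distribution of the NRT block space, i.e. the `(P,w,π)`-space where
`P` is the chain `1 ⪯ 2 ⪯ ⋯ ⪯ n` (modelled as `Fin n` with its natural order). -/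
theorem stmt9 (n : ℕ) (hn : 1 ≤ n) (w : F → ℕ) (hw0 : ∀ a : F, w a = 0 ↔ a = 0)
    (hwneg : ∀ a : F, w (-a) = w a) (hwadd : ∀ a b : F, w (a + b) ≤ w a + w b)
    (k : Fin n → ℕ) :
    (∀ r : ℕ, 1 ≤ r → r ≤ maxWt w →
      (Finset.univ.filter fun v : ∀ i, Fin (k i) → F => wtP w k v = r).card =
        (Dk w (k ⟨0, hn⟩) r).card) ∧
    (∀ t k₀ : ℕ, ∀ _ : 1 ≤ t, ∀ _ : t ≤ n - 1, 0 < k₀ → k₀ ≤ maxWt w →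
      (Finset.univ.filter fun v : ∀ i, Fin (k i) → F =>
          wtP w k v = t * maxWt w + k₀).card =
        Fintype.card F ^ (∑ i ∈ Finset.univ.filter (fun i : Fin n => (i : ℕ) < t), k i) *
          (Dk w (k ⟨t, by omega⟩) k₀).card) := by
  refine ⟨fun r hr hrM => ?_, fun t k₀ _ _ hk₀ hk₀M => ?_⟩
  · simpa [← filter_val_lt_eq_Iio] using stmt9_general hw0 k ⟨0, hn⟩ hr hrM
  · have ht : t < n := by omega
    simpa [filter_val_lt_eq_Iio ht] using stmt9_general hw0 k ⟨t, ht⟩ hk₀ hk₀M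
end
end

section
/- Let w be the Hamming weight on 𝔽_q (w(α) = 1 for α ≠ 0, w(0) = 0), so that w_{(P,w,π)}(x) = w_{(P,π)}(x) = |⟨supp_π(x)⟩|. Then for any 1 ≤ r ≤ n, the number of x ∈ 𝔽_q^N with w_{(P,π)}(x) = r is |A_r| = Σ_{j=1}^{r} Σ_{I ∈ 𝓘_j^r} (q^{k_{i_1}}−1)(q^{k_{i_2}}−1)⋯(q^{k_{i_j}}−1) · q^{k_{l_1}+k_{l_2}+⋯+k_{l_{r−j}}}, where for I ∈ 𝓘_j^r we write Max(I) = {i_1,…,i_j} and I ∖ Max(I) = {l_1,…,l_{r−j}}. Moreover, if k_i = k for all i ∈ [n], then |A_r| = Σ_{j=1}^{r} Σ_{I ∈ 𝓘_j^r} (q^k−1)^j · q^{k(r−j)}. -/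
open scoped Classical

noncomputable section

variable {F : Type*} [Field F] [Fintype F]
variable {ι : Type*} [Fintype ι] [PartialOrder ι]

/-- The `(P,π)`-weight: the cardinality of the ideal generated by the π-support. -/
def wtPpi (k : ι → ℕ) (x : ∀ i, Fin (k i) → F) : ℕ := (genIdeal (suppPi k x)).card

/-!
Every vector generates exactly one ideal, so `A_r` splits according to the ideals `I` of
cardinality `r`. Since every element of `I` lies below a maximal one, `x` generates `I` exactly when
`Max I ⊆ supp x ⊆ I`: the blocks of `x` are nonzero on `Max I`, arbitrary on `I \ Max I` and zero
elsewhere, and the three choices are independent. The maximal elements of `⟨supp x⟩` lie in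
`supp x`, so for the Hamming weight each of them contributes `1` to the `(P,w,π)`-weight.
-/

section IdealsOfPoset

open Finset

/-- The collection of all ideals of the poset of cardinality `r`, over which the generated ideals of
the vectors of weight `r` range. -/
def idealsOfCard (ι : Type*) [Fintype ι] [PartialOrder ι] (r : ℕ) : Finset (Finset ι) :=
  {I | IsIdeal I ∧ #I = r}

theorem mem_idealsOfCard {I : Finset ι} {r : ℕ} :
    I ∈ idealsOfCard ι r ↔ IsIdeal I ∧ #I = r := by
  simp only [idealsOfCard, mem_filter_univ]

theorem mem_idealsWithMax {I : Finset ι} {j r : ℕ} :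
    I ∈ idealsWithMax ι j r ↔ IsIdeal I ∧ #I = r ∧ #(maxElems I) = j := by
  simp only [idealsWithMax, mem_filter_univ]

theorem mem_genIdeal {A : Finset ι} {i : ι} : i ∈ genIdeal A ↔ ∃ j ∈ A, i ≤ j := by
  simp only [genIdeal, mem_filter_univ]

theorem mem_maxElems {I : Finset ι} {i : ι} : i ∈ maxElems I ↔ Maximal (· ∈ I) i := by
  simp only [maxElems, mem_filter, maximal_iff, eq_comm]

theorem maxElems_subset (I : Finset ι) : maxElems I ⊆ I := filter_subset _ _

theorem subset_genIdeal (A : Finset ι) : A ⊆ genIdeal A :=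
  fun i hi ↦ mem_genIdeal.2 ⟨i, hi, le_rfl⟩

theorem isIdeal_genIdeal (A : Finset ι) : IsIdeal (genIdeal A) := by
  intro a b hab hb
  obtain ⟨j, hj, hbj⟩ := mem_genIdeal.1 hb
  exact mem_genIdeal.2 ⟨j, hj, hab.trans hbj⟩

theorem maxElems_genIdeal_subset (A : Finset ι) : maxElems (genIdeal A) ⊆ A := by
  intro i hi
  have hmax := mem_maxElems.1 hi
  obtain ⟨j, hj, hij⟩ := mem_genIdeal.1 hmax.prop
  exact hmax.eq_of_le (subset_genIdeal A hj) hij ▸ hj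

theorem exists_mem_maxElems_le {I : Finset ι} {i : ι} (hi : i ∈ I) : ∃ j ∈ maxElems I, i ≤ j := by
  obtain ⟨j, hij, hj⟩ := I.exists_le_maximal hi
  exact ⟨j, mem_maxElems.2 hj, hij⟩

theorem maxElems_nonempty {I : Finset ι} (hI : I.Nonempty) : (maxElems I).Nonempty := by
  obtain ⟨i, hi⟩ := hI
  obtain ⟨j, hj, -⟩ := exists_mem_maxElems_le hi
  exact ⟨j, hj⟩

theorem IsIdeal.genIdeal_eq_iff {I A : Finset ι} (hI : IsIdeal I) :
    genIdeal A = I ↔ maxElems I ⊆ A ∧ A ⊆ I := by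
  constructor
  · rintro rfl
    exact ⟨maxElems_genIdeal_subset A, subset_genIdeal A⟩
  · rintro ⟨hmax, hsub⟩
    ext i
    rw [mem_genIdeal]
    constructor
    · rintro ⟨j, hj, hij⟩
      exact hI i j hij (hsub hj)
    · intro hi
      obtain ⟨j, hj, hij⟩ := exists_mem_maxElems_le hi
      exact ⟨j, hmax hj, hij⟩

theorem sum_idealsWithMax {M : Type*} [AddCommMonoid M] {r : ℕ} (hr : 1 ≤ r) (f : Finset ι → M) :
    ∑ j ∈ Icc 1 r, ∑ I ∈ idealsWithMax ι j r, f I = ∑ I ∈ idealsOfCard ι r, f I := by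
  have card_maxElems_mem : ∀ I ∈ idealsOfCard ι r, #(maxElems I) ∈ Icc 1 r := by
    intro I hI
    obtain ⟨-, rfl⟩ := mem_idealsOfCard.1 hI
    exact mem_Icc.2 ⟨(maxElems_nonempty (card_pos.1 hr)).card_pos, card_le_card (maxElems_subset I)⟩
  have idealsWithMax_eq (j : ℕ) :
      idealsWithMax ι j r = {I ∈ idealsOfCard ι r | #(maxElems I) = j} := by
    ext I
    simp only [mem_idealsWithMax, mem_filter, mem_idealsOfCard, and_assoc]
  simp only [idealsWithMax_eq, sum_fiberwise_of_maps_to card_maxElems_mem]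

end IdealsOfPoset

section CountingBySupport

open Finset

theorem card_filter_ne_zero_and_eq_zero {κ : Type*} [Fintype κ] {V : κ → Type*}
    [∀ i, Fintype (V i)] [∀ i, DecidableEq (V i)] [∀ i, Zero (V i)] {S T : Finset κ} (hST : S ⊆ T) :
    #{x : ∀ i, V i | (∀ i ∈ S, x i ≠ 0) ∧ ∀ i ∉ T, x i = 0} =
      (∏ i ∈ S, (Fintype.card (V i) - 1)) * ∏ i ∈ T \ S, Fintype.card (V i) := by
  let C (i : κ) : Finset (V i) := if i ∈ S then {0}ᶜ else if i ∈ T then univ else {0}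
  have filter_eq : ({x : ∀ i, V i | (∀ i ∈ S, x i ≠ 0) ∧ ∀ i ∉ T, x i = 0} : Finset _) =
      Fintype.piFinset C := by
    ext x
    simp only [mem_filter_univ, Fintype.mem_piFinset, C, ← forall_and]
    refine forall_congr' fun i ↦ ?_
    have mem_of_mem : i ∈ S → i ∈ T := @hST i
    by_cases hS : i ∈ S <;> by_cases hT : i ∈ T <;> simp_all
  calc
    _ = ∏ i, #(C i) := by rw [filter_eq, Fintype.card_piFinset]
    _ = ∏ i ∈ T, #(C i) := by
      refine (prod_subset (subset_univ T) fun i _ hT ↦ ?_).symm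
      simp [C, hT, mt (@hST i) hT]
    _ = (∏ i ∈ S, #(C i)) * ∏ i ∈ T \ S, #(C i) := by rw [mul_comm, prod_sdiff hST]
    _ = _ := by
      congr 1
      · exact prod_congr rfl fun i hi ↦ by simp [C, hi, card_compl]
      · exact prod_congr rfl fun i hi ↦ by simp_all [C]

theorem mem_suppPi {K κ : Type*} [Field K] [Fintype κ] {k : κ → ℕ} {x : ∀ i, Fin (k i) → K}
    {i : κ} : i ∈ suppPi k x ↔ x i ≠ 0 := by
  simp only [suppPi, mem_filter_univ]

theorem card_filter_genIdeal_suppPi_eq (k : ι → ℕ) {I : Finset ι} (hI : IsIdeal I) :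
    #{x : ∀ i, Fin (k i) → F | genIdeal (suppPi k x) = I} =
      (∏ i ∈ maxElems I, (Fintype.card F ^ k i - 1)) *
        Fintype.card F ^ ∑ l ∈ I \ maxElems I, k l := by
  have generates_iff (x : ∀ i, Fin (k i) → F) : genIdeal (suppPi k x) = I ↔
      (∀ i ∈ maxElems I, x i ≠ 0) ∧ ∀ i ∉ I, x i = 0 := by
    simp only [hI.genIdeal_eq_iff, subset_iff, mem_suppPi, not_imp_comm, ne_eq]
  rw [filter_congr fun x _ ↦ generates_iff x,
    card_filter_ne_zero_and_eq_zero (maxElems_subset I)]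
  simp only [Fintype.card_pi_const, prod_pow_eq_pow_sum]

theorem card_filter_genIdeal_suppPi_eq_of_const {k : ι → ℕ} {m : ℕ} (hk : ∀ i, k i = m)
    {I : Finset ι} (hI : IsIdeal I) :
    #{x : ∀ i, Fin (k i) → F | genIdeal (suppPi k x) = I} =
      (Fintype.card F ^ m - 1) ^ #(maxElems I) *
        Fintype.card F ^ (m * (#I - #(maxElems I))) := by
  simp only [card_filter_genIdeal_suppPi_eq k hI, hk, prod_const, sum_const, smul_eq_mul,
    card_sdiff_of_subset (maxElems_subset I), mul_comm m]

theorem card_filter_wtPpi_eq_sum_idealsOfCard (k : ι → ℕ) (r : ℕ) :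
    #{x : ∀ i, Fin (k i) → F | wtPpi k x = r} =
      ∑ I ∈ idealsOfCard ι r, #{x : ∀ i, Fin (k i) → F | genIdeal (suppPi k x) = I} := by
  have mem_iff (x : ∀ i, Fin (k i) → F) :
      wtPpi k x = r ↔ genIdeal (suppPi k x) ∈ idealsOfCard ι r := by
    simp only [mem_idealsOfCard, isIdeal_genIdeal, true_and, wtPpi]
  simp only [mem_iff, sum_card_fiberwise_eq_card_filter]

theorem card_filter_wtPpi_eq_sum_idealsWithMax (k : ι → ℕ) {r : ℕ} (hr : 1 ≤ r) :
    #{x : ∀ i, Fin (k i) → F | wtPpi k x = r} =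
      ∑ j ∈ Icc 1 r, ∑ I ∈ idealsWithMax ι j r,
        #{x : ∀ i, Fin (k i) → F | genIdeal (suppPi k x) = I} := by
  rw [card_filter_wtPpi_eq_sum_idealsOfCard, sum_idealsWithMax hr]

end CountingBySupport

section HammingWeight

open Finset

theorem sup_ite_zero_one_eq_one {κ : Type*} {s : Finset κ} {p : κ → Prop} {i : κ} (hi : i ∈ s)
    (hp : ¬p i) : (s.sup fun j ↦ if p j then 0 else 1) = 1 := by
  refine le_antisymm (Finset.sup_le fun j _ ↦ ?_) ?_
  · split_ifs <;> simp
  · exact (if_neg hp).ge.trans (le_sup (f := fun j ↦ if p j then 0 else 1) hi)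

theorem maxWt_eq_one_of_hamming {w : F → ℕ} (hw : ∀ a : F, w a = if a = 0 then 0 else 1) :
    maxWt w = 1 := by
  rw [maxWt, funext hw]
  exact sup_ite_zero_one_eq_one (mem_univ 1) one_ne_zero

theorem blockWt_eq_one_of_hamming {K : Type*} [Field K] {w : K → ℕ}
    (hw : ∀ a : K, w a = if a = 0 then 0 else 1) {m : ℕ} {v : Fin m → K} (hv : v ≠ 0) :
    blockWt w v = 1 := by
  obtain ⟨t, ht⟩ := Function.ne_iff.1 hv
  simp only [blockWt, hw]
  exact sup_ite_zero_one_eq_one (mem_univ t) ht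

theorem wtP_eq_wtPpi_of_hamming {w : F → ℕ} (hw : ∀ a : F, w a = if a = 0 then 0 else 1)
    (k : ι → ℕ) (x : ∀ i, Fin (k i) → F) : wtP w k x = wtPpi k x := by
  set I := genIdeal (suppPi k x) with hI
  have blockWt_maxElems : ∀ i ∈ maxElems I, blockWt w (x i) = 1 := fun i hi ↦
    blockWt_eq_one_of_hamming hw (mem_suppPi.1 (maxElems_genIdeal_subset _ hi))
  calc
    wtP w k x = #(maxElems I) + #(I \ maxElems I) := by
      rw [wtP, ← hI, sum_congr rfl blockWt_maxElems, maxWt_eq_one_of_hamming hw, one_mul,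
        card_eq_sum_ones (maxElems I)]
    _ = wtPpi k x := by rw [add_comm, card_sdiff_add_card_eq_card (maxElems_subset I), wtPpi]

end HammingWeight

/-- for `w` the Hamming weight, the `(P,w,π)`-weight is the `(P,π)`-weight
`|⟨supp_π(x)⟩|`, and the number of vectors of `(P,π)`-weight `r` is given by the stated sum over
ideals of cardinality `r`; moreover, the simplified form holds when all blocks have the same
dimension. -/
theorem stmt10 (w : F → ℕ) (hw : ∀ a : F, w a = if a = 0 then 0 else 1)
    (k : ι → ℕ) (r : ℕ) (hr1 : 1 ≤ r) (hr2 : r ≤ Fintype.card ι) :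
    (∀ x : ∀ i, Fin (k i) → F, wtP w k x = wtPpi k x) ∧
    ((Finset.univ.filter fun x : ∀ i, Fin (k i) → F => wtPpi k x = r).card =
      ∑ j ∈ Finset.Icc 1 r, ∑ I ∈ idealsWithMax ι j r,
        (∏ i ∈ maxElems I, (Fintype.card F ^ k i - 1)) *
          Fintype.card F ^ (∑ l ∈ I \ maxElems I, k l)) ∧
    (∀ m : ℕ, (∀ i, k i = m) →
      (Finset.univ.filter fun x : ∀ i, Fin (k i) → F => wtPpi k x = r).card =
        ∑ j ∈ Finset.Icc 1 r, ∑ I ∈ idealsWithMax ι j r,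
          (Fintype.card F ^ m - 1) ^ j * Fintype.card F ^ (m * (r - j))) := by
  refine ⟨wtP_eq_wtPpi_of_hamming hw k, ?_, fun m hm ↦ ?_⟩
  all_goals
    rw [card_filter_wtPpi_eq_sum_idealsWithMax k hr1]
    refine Finset.sum_congr rfl fun j _ ↦ Finset.sum_congr rfl fun I hI ↦ ?_
    obtain ⟨hideal, rfl, rfl⟩ := mem_idealsWithMax.1 hI
  · exact card_filter_genIdeal_suppPi_eq k hideal
  · exact card_filter_genIdeal_suppPi_eq_of_const hm hideal
end
end
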